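/- Suppose X_α^0 ∈ 𝒳_α satisfies E_{λQ_α^c}[X_α^0] = γ_α^c and E_μ[X_α^0] < α. Then the set A := {ω ∈ Ω : X_α^0(ω) ≠ 1} satisfies λ·Q_α^c(A) = 0. -/

import Mathlib

open MeasureTheory Filter Topology
open scoped ENNReal

/-- `X` belongs to the space `𝒳` of bounded measurable real-valued functions on `Ω`. -/
def MemX {Ω : Type*} [MeasurableSpace Ω] (X : Ω → ℝ) : Prop :=
  Measurable X ∧ ∃ M : ℝ, ∀ ω, |X ω| ≤ M

/-- A sublinear operator on `𝒳`: monotone, constant preserving, subadditive and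
positively homogeneous. -/
def IsSublinearOp {Ω : Type*} [MeasurableSpace Ω] (ρ : (Ω → ℝ) → ℝ) : Prop :=
  (∀ X Y : Ω → ℝ, MemX X → MemX Y → (∀ ω, Y ω ≤ X ω) → ρ Y ≤ ρ X) ∧
  (∀ c : ℝ, ρ (fun _ => c) = c) ∧
  (∀ X Y : Ω → ℝ, MemX X → MemX Y → ρ (X + Y) ≤ ρ X + ρ Y) ∧
  (∀ c : ℝ, 0 ≤ c → ∀ X : Ω → ℝ, MemX X → ρ (c • X) = c * ρ X)

/-- A linear functional on `𝒳`. -/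
def IsLinearOp {Ω : Type*} [MeasurableSpace Ω] (L : (Ω → ℝ) → ℝ) : Prop :=
  (∀ X Y : Ω → ℝ, MemX X → MemX Y → L (X + Y) = L X + L Y) ∧
  (∀ (c : ℝ) (X : Ω → ℝ), MemX X → L (c • X) = c * L X)

/-- `L` is dominated by `ρ` on `𝒳`. -/
def Dominated {Ω : Type*} [MeasurableSpace Ω] (L ρ : (Ω → ℝ) → ℝ) : Prop :=
  ∀ X : Ω → ℝ, MemX X → L X ≤ ρ X

/-- The conjugate operator `E_ῡ[X] := -E_υ[-X]`. -/
def conjOp {Ω : Type*} (ρ : (Ω → ℝ) → ℝ) : (Ω → ℝ) → ℝ := fun X => -ρ (-X)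

/-- The set `𝒳_α` of test functions at significance level `α`. -/
def testSet {Ω : Type*} [MeasurableSpace Ω] (Emu : (Ω → ℝ) → ℝ) (α : ℝ) : Set (Ω → ℝ) :=
  {X | MemX X ∧ (∀ ω, 0 ≤ X ω ∧ X ω ≤ 1) ∧ Emu X ≤ α}

/-- A positive normalized linear functional `Qp` is *pure additive* if there is a
sequence of measurable sets `A n ↓ ∅` with `Qp(1_{A n}) → 1`. -/
def PureAdditive {Ω : Type*} [MeasurableSpace Ω] (Qp : (Ω → ℝ) → ℝ) : Prop :=
  ∃ A : ℕ → Set Ω, (∀ n, MeasurableSet (A n)) ∧ Antitone A ∧ (⋂ n, A n) = ∅ ∧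
    Tendsto (fun n => Qp ((A n).indicator fun _ => (1 : ℝ))) atTop (𝓝 1)

/-- Hypothesis (H1): for every sequence of measurable sets `A n ↓ ∅` such that
`lim E_υ[1_{A n}]` exists and is nonzero, one has `lim E_μ[1_{A n}] = 0`. -/
def HypH1 {Ω : Type*} [MeasurableSpace Ω] (Emu Eups : (Ω → ℝ) → ℝ) : Prop :=
  ∀ A : ℕ → Set Ω, (∀ n, MeasurableSet (A n)) → Antitone A → (⋂ n, A n) = ∅ →
    ∀ l : ℝ, Tendsto (fun n => Eups ((A n).indicator fun _ => (1 : ℝ))) atTop (𝓝 l) →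
      l ≠ 0 →
      Tendsto (fun n => Emu ((A n).indicator fun _ => (1 : ℝ))) atTop (𝓝 0)

/-- Hypothesis (H2): for every `X ∈ 𝒳_α` with `E_μ[X] > 0` and every positive
integer `K`, `E_μ[X] > E_μ[(X - 1/K)⁺]`. -/
def HypH2 {Ω : Type*} [MeasurableSpace Ω] (Emu : (Ω → ℝ) → ℝ) (α : ℝ) : Prop :=
  ∀ X ∈ testSet Emu α, 0 < Emu X → ∀ K : ℕ, 0 < K →
    Emu (fun ω => max (X ω - 1 / (K : ℝ)) 0) < Emu X

/-- Hypothesis (H3): for every sequence of measurable sets `A n ↓ ∅`,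
`lim E_μ[1_{A n}] < 1` and `lim E_υ[1_{A n}] < 1`. -/
def HypH3 {Ω : Type*} [MeasurableSpace Ω] (Emu Eups : (Ω → ℝ) → ℝ) : Prop :=
  ∀ A : ℕ → Set Ω, (∀ n, MeasurableSet (A n)) → Antitone A → (⋂ n, A n) = ∅ →
    (∀ l : ℝ, Tendsto (fun n => Emu ((A n).indicator fun _ => (1 : ℝ))) atTop (𝓝 l) →
      l < 1) ∧
    (∀ l : ℝ, Tendsto (fun n => Eups ((A n).indicator fun _ => (1 : ℝ))) atTop (𝓝 l) →
      l < 1)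

/-- The randomized tests on `Ω`: the members of `𝒳` with values in `[0, 1]`, before the size
constraint `E_μ[X] ≤ α` that defines `testSet` is imposed. -/
def randomizedTests (Ω : Type*) [MeasurableSpace Ω] : Set (Ω → ℝ) :=
  {X | MemX X} ∩ Set.Icc 0 1

/-- A strict constraint `ρ x < α` survives a short move from `x` towards any point `y`, and such a
move would increase a concave objective whenever `f x < f y`. -/
theorem isMaxOn_of_isMaxOn_sublevel_of_lt {E : Type*} [AddCommMonoid E] [SMul ℝ E] {s : Set E}
    {f ρ : E → ℝ} {α : ℝ} {x : E} (hf : ConcaveOn ℝ s f) (hρ : ConvexOn ℝ s ρ) (hx : x ∈ s)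
    (hmax : IsMaxOn f {y ∈ s | ρ y ≤ α} x) (hlt : ρ x < α) : IsMaxOn f s x := by
  intro y hy
  obtain ⟨t, ht_small, ht_pos, ht_one⟩ :
      ∃ t : ℝ, (1 - t) * ρ x + t * ρ y < α ∧ t ∈ Set.Ioo 0 1 := by
    have hlim : Tendsto (fun t : ℝ => (1 - t) * ρ x + t * ρ y) (𝓝[>] 0) (𝓝 (ρ x)) :=
      Continuous.tendsto' (by fun_prop) _ _ (by simp) |>.mono_left nhdsWithin_le_nhds
    exact ((hlim.eventually_lt_const hlt).and (Ioo_mem_nhdsGT one_pos)).exists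
  have ht_nonneg : 0 ≤ 1 - t := sub_nonneg.2 ht_one.le
  have hsum : 1 - t + t = 1 := sub_add_cancel 1 t
  have hmem : (1 - t) • x + t • y ∈ {y ∈ s | ρ y ≤ α} :=
    ⟨hρ.1 hx hy ht_nonneg ht_pos.le hsum,
      (hρ.2 hx hy ht_nonneg ht_pos.le hsum).trans ht_small.le⟩
  have hle : (1 - t) * f x + t * f y ≤ f x :=
    (hf.2 hx hy ht_nonneg ht_pos.le hsum).trans (hmax hmem)
  exact le_of_mul_le_mul_left (by linarith) ht_pos

theorem isMaxOn_of_eq_csSup {β γ : Type*} [ConditionallyCompleteLattice γ] {f : β → γ}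
    {s : Set β} {x : β} (hbdd : BddAbove (f '' s)) (hx : f x = sSup (f '' s)) :
    IsMaxOn f s x :=
  fun _ hy => hx ▸ le_csSup hbdd (Set.mem_image_of_mem f hy)

section BoundedMeasurable

variable {Ω : Type*} [MeasurableSpace Ω]

theorem concaveOn_integral {Q : Measure Ω} {s : Set (Ω → ℝ)} (hs : Convex ℝ s)
    (hint : ∀ X ∈ s, Integrable X Q) : ConcaveOn ℝ s fun X => ∫ ω, X ω ∂Q := by
  refine ⟨hs, fun X hX Y hY a b _ _ _ => ge_of_eq ?_⟩
  calc ∫ ω, (a • X + b • Y) ω ∂Q = ∫ ω, (a • X) ω ∂Q + ∫ ω, (b • Y) ω ∂Q :=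
        integral_add' ((hint X hX).smul a) ((hint Y hY).smul b)
    _ = a • ∫ ω, X ω ∂Q + b • ∫ ω, Y ω ∂Q := by simp only [Pi.smul_apply, integral_smul]

theorem integral_le_measureReal_univ_of_ae_le_one {Q : Measure Ω} [IsFiniteMeasure Q] {X : Ω → ℝ}
    (hint : Integrable X Q) (hX : X ≤ᵐ[Q] 1) : ∫ ω, X ω ∂Q ≤ Q.real Set.univ := by
  simpa using integral_mono_ae hint (integrable_const 1) hX

theorem ae_eq_one_of_measureReal_univ_le_integral {Q : Measure Ω} [IsFiniteMeasure Q] {X : Ω → ℝ}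
    (hint : Integrable X Q) (hX : X ≤ᵐ[Q] 1) (hle : Q.real Set.univ ≤ ∫ ω, X ω ∂Q) :
    X =ᵐ[Q] 1 := by
  have heq : ∫ ω, X ω ∂Q = Q.real Set.univ :=
    (integral_le_measureReal_univ_of_ae_le_one hint hX).antisymm hle
  exact (integral_eq_iff_of_ae_le hint (integrable_const 1) hX).1 (by simpa using heq)

theorem memX_const (c : ℝ) : MemX fun _ : Ω => c :=
  ⟨measurable_const, |c|, fun _ => le_rfl⟩

theorem MemX.add {X Y : Ω → ℝ} (hX : MemX X) (hY : MemX Y) : MemX (X + Y) := by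
  obtain ⟨hX, M, hM⟩ := hX
  obtain ⟨hY, N, hN⟩ := hY
  exact ⟨hX.add hY, M + N, fun ω => (abs_add_le _ _).trans (add_le_add (hM ω) (hN ω))⟩

theorem MemX.const_smul {X : Ω → ℝ} (hX : MemX X) (c : ℝ) : MemX (c • X) := by
  obtain ⟨hX, M, hM⟩ := hX
  refine ⟨hX.const_smul c, |c| * M, fun ω => ?_⟩
  rw [Pi.smul_apply, smul_eq_mul, abs_mul]
  exact mul_le_mul_of_nonneg_left (hM ω) (abs_nonneg c)

theorem MemX.integrable {X : Ω → ℝ} (hX : MemX X) (Q : Measure Ω) [IsFiniteMeasure Q] :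
    Integrable X Q := by
  obtain ⟨hX, M, hM⟩ := hX
  exact .of_bound hX.aestronglyMeasurable M (.of_forall hM)

theorem convex_setOf_memX : Convex ℝ {X : Ω → ℝ | MemX X} :=
  fun _ hX _ hY a b _ _ _ => (hX.const_smul a).add (hY.const_smul b)

theorem IsSublinearOp.convexOn {ρ : (Ω → ℝ) → ℝ} (hρ : IsSublinearOp ρ) :
    ConvexOn ℝ {X : Ω → ℝ | MemX X} ρ := by
  obtain ⟨-, -, hsub, hhom⟩ := hρ
  refine ⟨convex_setOf_memX, fun X hX Y hY a b ha hb _ => ?_⟩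
  calc ρ (a • X + b • Y) ≤ ρ (a • X) + ρ (b • Y) := hsub _ _ (hX.const_smul a) (hY.const_smul b)
    _ = a • ρ X + b • ρ Y := by rw [hhom a ha X hX, hhom b hb Y hY, smul_eq_mul, smul_eq_mul]

theorem convex_randomizedTests : Convex ℝ (randomizedTests Ω) :=
  convex_setOf_memX.inter (convex_Icc 0 1)

theorem one_mem_randomizedTests : 1 ∈ randomizedTests Ω :=
  ⟨memX_const 1, zero_le_one, le_rfl⟩

theorem testSet_eq_sep_randomizedTests (ρ : (Ω → ℝ) → ℝ) (α : ℝ) :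
    testSet ρ α = {X ∈ randomizedTests Ω | ρ X ≤ α} := by
  ext X
  simp only [testSet, randomizedTests, Set.mem_ofPred_eq, Set.mem_inter_iff, Set.mem_Icc,
    Pi.le_def, Pi.zero_apply, Pi.one_apply, forall_and, and_assoc]

theorem bddAbove_mul_integral_testSet {lam : ℝ} (hlam : 0 ≤ lam) (Q : Measure Ω)
    [IsFiniteMeasure Q] (ρ : (Ω → ℝ) → ℝ) (α : ℝ) :
    BddAbove ((fun X : Ω → ℝ => lam * ∫ ω, X ω ∂Q) '' testSet ρ α) := by
  rw [testSet_eq_sep_randomizedTests]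
  refine ⟨lam * Q.real Set.univ, ?_⟩
  rintro _ ⟨X, ⟨hX, -⟩, rfl⟩
  exact mul_le_mul_of_nonneg_left (integral_le_measureReal_univ_of_ae_le_one
    (hX.1.integrable Q) (.of_forall hX.2.2)) hlam

theorem slack_optimal_charges_one_general {ρ : (Ω → ℝ) → ℝ} {α lam : ℝ} {Q : Measure Ω}
    [IsFiniteMeasure Q] {X : Ω → ℝ} (hρ : ConvexOn ℝ (randomizedTests Ω) ρ) (hlam : 0 ≤ lam)
    (hX : X ∈ testSet ρ α) (hmax : IsMaxOn (fun Y => lam * ∫ ω, Y ω ∂Q) (testSet ρ α) X)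
    (hslack : ρ X < α) : lam * Q.real {ω | X ω ≠ 1} = 0 := by
  rw [testSet_eq_sep_randomizedTests] at hX hmax
  obtain ⟨hXtest, -⟩ := hX
  have hconc : ConcaveOn ℝ (randomizedTests Ω) fun Y => lam * ∫ ω, Y ω ∂Q :=
    (concaveOn_integral convex_randomizedTests fun Y hY => hY.1.integrable Q).smul hlam
  have hone : lam * Q.real Set.univ ≤ lam * ∫ ω, X ω ∂Q := by
    simpa using isMaxOn_of_isMaxOn_sublevel_of_lt hconc hρ hXtest hmax hslack
      one_mem_randomizedTests
  rcases hlam.eq_or_lt with rfl | hpos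
  · exact zero_mul _
  · have hae : X =ᵐ[Q] 1 := ae_eq_one_of_measureReal_univ_le_integral (hXtest.1.integrable Q)
      (.of_forall hXtest.2.2) (le_of_mul_le_mul_left hone hpos)
    have hnull : Q {ω | X ω ≠ 1} = 0 := ae_iff.1 hae
    rw [measureReal_def, hnull, ENNReal.toReal_zero, mul_zero]

end BoundedMeasurable

/-- Proposition 4.1: if a solution `X_α^0` of problem (4.3) satisfies
`E_μ[X_α^0] < α`, then the set `A = {X_α^0 ≠ 1}` satisfies `λ·Q_α^c(A) = 0`. -/
theorem slack_optimal_charges_one {Ω : Type*} [MeasurableSpace Ω]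
    (Emu Eups : (Ω → ℝ) → ℝ)
    (hEmu : IsSublinearOp Emu) (hEups : IsSublinearOp Eups)
    (α : ℝ) (hα0 : 0 < α) (hα1 : α < 1)
    (lam : ℝ) (hlam0 : 0 ≤ lam) (hlam1 : lam ≤ 1)
    (Qc : Measure Ω) (hQc : IsProbabilityMeasure Qc)
    (Qp : (Ω → ℝ) → ℝ) (hQplin : IsLinearOp Qp)
    (hQppos : ∀ X : Ω → ℝ, MemX X → (∀ ω, 0 ≤ X ω) → 0 ≤ Qp X)
    (hQpone : Qp (fun _ => 1) = 1) (hQppure : PureAdditive Qp)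
    (Qa : (Ω → ℝ) → ℝ) (hQalin : IsLinearOp Qa) (hQadom : Dominated Qa Eups)
    (hQasup : sSup (Qa '' testSet Emu α) = sSup (conjOp Eups '' testSet Emu α))
    (hQadec : ∀ X : Ω → ℝ, MemX X → Qa X = lam * ∫ ω, X ω ∂Qc + (1 - lam) * Qp X)
    (γ : ℝ) (hγ : γ = sSup ((fun X : Ω → ℝ => lam * ∫ ω, X ω ∂Qc) '' testSet Emu α))
    (Xa0 : Ω → ℝ) (hXa0 : Xa0 ∈ testSet Emu α)
    (hXopt : lam * ∫ ω, Xa0 ω ∂Qc = γ)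
    (hslack : Emu Xa0 < α) :
    lam * (Qc {ω | Xa0 ω ≠ 1}).toReal = 0 := by
  exact slack_optimal_charges_one_general
    (hEmu.convexOn.subset Set.inter_subset_left convex_randomizedTests) hlam0 hXa0
    (isMaxOn_of_eq_csSup (bddAbove_mul_integral_testSet hlam0 Qc Emu α) (hXopt.trans hγ)) hslack
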